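/- Let B be a smooth generalized Bayesian network. Then for every cutset C of B, the limit semantics [B]_{Lim-C} is a singleton, and Lim(B, C, γ0) is defined for every initial distribution γ0 over assignments of C. -/

import Mathlib

open Filter
open scoped Classical

noncomputable section

namespace GBNPaper

variable {V : Type} [Fintype V] [DecidableEq V]

/-- A distribution over a finite type: nonnegative values summing to one. -/
def IsDist {α : Type} [Fintype α] (μ : α → ℝ) : Prop :=
  (∀ a, 0 ≤ μ a) ∧ ∑ a, μ a = 1

/-- The set of parents of a node `X` w.r.t. an edge set `E`. -/
def Pre (E : Finset (V × V)) (X : V) : Finset V :=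
  (E.filter fun e => e.2 = X).image Prod.fst

/-- The set of initial (parentless) nodes. -/
def InitSet (E : Finset (V × V)) : Finset V :=
  Finset.univ.filter fun X => Pre E X = ∅

/-- Assignments over a subset `U` of the nodes. -/
abbrev Asg (U : Finset V) : Type := {x // x ∈ U} → Bool

/-- A full assignment `b` agrees with a partial assignment `d` on `U`. -/
abbrev Agrees (b : V → Bool) (U : Finset V) (d : Asg U) : Prop :=
  ∀ x : {x // x ∈ U}, b x.1 = d x

/-- A generalized Bayesian network over node set `V`. -/
structure GBN (V : Type) [Fintype V] [DecidableEq V] where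
  /-- the directed edges -/
  edges : Finset (V × V)
  /-- CPT entries: the probability of `X = T` given an assignment of the parents of `X` -/
  cpt : (X : V) → Asg (Pre edges X) → ℝ
  cpt_nonneg : ∀ X b, 0 ≤ cpt X b
  cpt_le_one : ∀ X b, cpt X b ≤ 1
  /-- the initial distribution over assignments of the initial nodes -/
  ι : Asg (InitSet edges) → ℝ
  ι_dist : IsDist ι

/-- Probability of an event (set of full assignments) under `μ`. -/
def probIf (μ : (V → Bool) → ℝ) (p : (V → Bool) → Prop) : ℝ :=
  ∑ b : V → Bool, if p b then μ b else 0

/-- The marginal distribution of `μ` on `U`. -/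
def marginal (μ : (V → Bool) → ℝ) (U : Finset V) : Asg U → ℝ :=
  fun d => probIf μ fun b => Agrees b U d

/-- `Pr(X = v | parents as given by b)`. -/
def copyProb (B : GBN V) (X : V) (v : Bool) (b : V → Bool) : ℝ :=
  if v then B.cpt X (fun p => b p.1) else 1 - B.cpt X (fun p => b p.1)

/-- The standard BN semantics (chain rule) of a GBN. -/
def distBN (B : GBN V) (b : V → Bool) : ℝ :=
  B.ι (fun x => b x.1) *
    ∏ X ∈ Finset.univ \ InitSet B.edges, copyProb B X (b X) b

/-- The edge set contains no directed cycle. -/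
def Acyclic (E : Finset (V × V)) : Prop :=
  ∀ x : V, ¬ Relation.TransGen (fun a b => (a, b) ∈ E) x x

/-- `C` is a cutset: every directed cycle contains a node of `C`. -/
def IsCutset (E : Finset (V × V)) (C : Finset V) : Prop :=
  ∀ x : V, ¬ Relation.TransGen (fun a b => (a, b) ∈ E ∧ a ∉ C ∧ b ∉ C) x x

/-- The standard BN semantics of the `C`-dissected GBN `B↑C↑γ`, as a joint
distribution over assignments of the original nodes `V` together with
assignments of the copies `C'` of the cutset nodes. -/
def distDissect (B : GBN V) (C : Finset V) (γ : Asg C → ℝ)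
    (b : V → Bool) (c : Asg C) : ℝ :=
  B.ι (fun x => b x.1) * γ (fun x => b x.1) *
    (∏ X ∈ (Finset.univ \ InitSet B.edges) \ C, copyProb B X (b X) b) *
    ∏ Y ∈ C.attach, copyProb B Y.1 (c Y) b

/-- `Next(B,C,γ)`: restrict `dist_BN(B↑C↑γ)` to `(V∖C) ∪ C'` and re-identify
the copies with the original cutset nodes. -/
def Next (B : GBN V) (C : Finset V) (γ : Asg C → ℝ) (a : V → Bool) : ℝ :=
  ∑ b : V → Bool,
    if ∀ x : V, x ∉ C → b x = a x then distDissect B C γ b (fun y => a y.1) else 0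

/-- `Extend(B,C,γ) = dist_BN(B↑C↑γ)|_V`. -/
def Extend (B : GBN V) (C : Finset V) (γ : Asg C → ℝ) (a : V → Bool) : ℝ :=
  ∑ c : Asg C, distDissect B C γ a c

/-- Dirac (point) distribution. -/
def DiracD {α : Type} [DecidableEq α] (b : α) : α → ℝ := fun c => if c = b then 1 else 0

/-- Transition matrix of the cutset Markov chain `M_{B↑C}`:
`P(b,c) = Next(B,C,Dirac(b))|_C (c)`. -/
def cutsetP (B : GBN V) (C : Finset V) (b c : Asg C) : ℝ :=
  marginal (Next B C (DiracD b)) C c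

/-- Vector-matrix multiplication `γ·P`. -/
def vecMul {α : Type} [Fintype α] (γ : α → ℝ) (P : α → α → ℝ) : α → ℝ :=
  fun c => ∑ b, γ b * P b c

/-- The transient distributions `γ0·P^n`. -/
def matIter {α : Type} [Fintype α] (P : α → α → ℝ) (γ0 : α → ℝ) : ℕ → (α → ℝ)
  | 0 => γ0
  | n + 1 => vecMul (matIter P γ0 n) P

/-- The sequence `γ_{n+1} = Next(B,C,γ_n)|_C`. -/
def nextSeq (B : GBN V) (C : Finset V) (γ0 : Asg C → ℝ) : ℕ → (Asg C → ℝ)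
  | 0 => γ0
  | n + 1 => marginal (Next B C (nextSeq B C γ0 n)) C

/-- Cesàro averages of a sequence of vectors. -/
def cesaro {α : Type} (f : ℕ → α → ℝ) (n : ℕ) : α → ℝ :=
  fun a => (∑ i ∈ Finset.range (n + 1), f i a) / (n + 1)

/-- The Markov chain semantics `[B]_{MC-C}`: image of
`γ0 ↦ Extend(B,C,lrf^{γ0})` over all initial cutset distributions `γ0`,
where `lrf^{γ0}` is the Cesàro limit of the transient distributions. -/
def MCSem (B : GBN V) (C : Finset V) : Set ((V → Bool) → ℝ) :=
  { μ | ∃ γ0 γ, IsDist γ0 ∧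
      Tendsto (cesaro (matIter (cutsetP B C) γ0)) atTop (nhds γ) ∧
      μ = Extend B C γ }

/-- The limit semantics `[B]_{Lim-C}`. -/
def LimSem (B : GBN V) (C : Finset V) : Set ((V → Bool) → ℝ) :=
  { μ | ∃ γ0 γ, IsDist γ0 ∧
      Tendsto (nextSeq B C γ0) atTop (nhds γ) ∧
      μ = Extend B C γ }

/-- The limit average semantics `[B]_{LimAvg-C}`. -/
def LimAvgSem (B : GBN V) (C : Finset V) : Set ((V → Bool) → ℝ) :=
  { μ | ∃ γ0 γ, IsDist γ0 ∧
      Tendsto (cesaro (nextSeq B C γ0)) atTop (nhds γ) ∧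
      μ = Extend B C γ }

/-- The Markov chain semantics in stationary-distribution form:
`{ Extend(B,C,γ) : γ a distribution with γ = γ·P }`. -/
def MCStatSem (B : GBN V) (C : Finset V) : Set ((V → Bool) → ℝ) :=
  { μ | ∃ γ : Asg C → ℝ, IsDist γ ∧ γ = vecMul γ (cutsetP B C) ∧ μ = Extend B C γ }

/-- Strong CPT-consistency of `μ` for node `X`. -/
def StrongCPT (B : GBN V) (μ : (V → Bool) → ℝ) (X : V) : Prop :=
  ∀ c : Asg (Pre B.edges X),
    probIf μ (fun f => f X = true ∧ Agrees f (Pre B.edges X) c) =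
      probIf μ (fun f => Agrees f (Pre B.edges X) c) * B.cpt X c

/-- Weak CPT-consistency of `μ` for node `X`. -/
def WeakCPT (B : GBN V) (μ : (V → Bool) → ℝ) (X : V) : Prop :=
  probIf μ (fun f => f X = true) =
    ∑ c : Asg (Pre B.edges X),
      probIf μ (fun f => Agrees f (Pre B.edges X) c) * B.cpt X c

/-- The CPT semantics `[B]_{Cpt}`. -/
def CptSem (B : GBN V) : Set ((V → Bool) → ℝ) :=
  { μ | IsDist μ ∧ marginal μ (InitSet B.edges) = B.ι ∧
      ∀ X, X ∉ InitSet B.edges → StrongCPT B μ X }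

/-- `(X ⊥ Y | Z) ∈ Indep(μ)`. -/
def IndepTriple (μ : (V → Bool) → ℝ) (X Y Z : Finset V) : Prop :=
  ∀ (a : Asg X) (b : Asg Y) (c : Asg Z),
    probIf μ (fun f => Agrees f Y b ∧ Agrees f Z c) = 0 ∨
    probIf μ (fun f => Agrees f X a ∧ Agrees f Y b ∧ Agrees f Z c) /
        probIf μ (fun f => Agrees f Y b ∧ Agrees f Z c) =
      probIf μ (fun f => Agrees f X a ∧ Agrees f Z c) /
        probIf μ (fun f => Agrees f Z c)

def PairwiseDisjoint3 (X Y Z : Finset V) : Prop :=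
  Disjoint X Y ∧ Disjoint X Z ∧ Disjoint Y Z

/-- `Indep(μ)` as a set of triples. -/
def IndepSet (μ : (V → Bool) → ℝ) : Set (Finset V × Finset V × Finset V) :=
  { t | PairwiseDisjoint3 t.1 t.2.1 t.2.2 ∧ IndepTriple μ t.1 t.2.1 t.2.2 }

/-- The CPT-I semantics `[B]_{Cpt-I}`. -/
def CptISem (B : GBN V) (I : Set (Finset V × Finset V × Finset V)) :
    Set ((V → Bool) → ℝ) :=
  { μ | μ ∈ CptSem B ∧ I ⊆ IndepSet μ }

/-! d-separation -/

def Adjacent (E : Finset (V × V)) (x y : V) : Prop := (x, y) ∈ E ∨ (y, x) ∈ E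

/-- Reachability along directed edges (including the node itself). -/
def Reaches (E : Finset (V × V)) (x y : V) : Prop :=
  Relation.ReflTransGen (fun a b => (a, b) ∈ E) x y

/-- An intermediate triple `a, w, b` on a path blocks it given `Z`:
either `w ∈ Z` and `w` lies in a chain or a fork, or `w` lies in a collider
and no node reachable from `w` (including `w`) is in `Z`. -/
def BlockedTriple (E : Finset (V × V)) (Z : Finset V) (a w b : V) : Prop :=
  (w ∈ Z ∧ (((a, w) ∈ E ∧ (w, b) ∈ E) ∨ ((b, w) ∈ E ∧ (w, a) ∈ E) ∨
      ((w, a) ∈ E ∧ (w, b) ∈ E))) ∨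
  ((a, w) ∈ E ∧ (b, w) ∈ E ∧ ∀ d, Reaches E w d → d ∉ Z)

/-- A path (as a list of nodes) is blocked given `Z`. -/
def Blocked (E : Finset (V × V)) (Z : Finset V) (W : List V) : Prop :=
  ∃ l₁ a w b l₂, W = l₁ ++ a :: w :: b :: l₂ ∧ BlockedTriple E Z a w b

/-- `x` and `y` are d-separated given `Z`: every undirected simple path
from `x` to `y` is blocked given `Z`. -/
def DSepNodes (E : Finset (V × V)) (x y : V) (Z : Finset V) : Prop :=
  ∀ W : List V, W.Chain' (Adjacent E) → W.Nodup →
    W.head? = some x → W.getLast? = some y → Blocked E Z W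

def DSep (E : Finset (V × V)) (X Y Z : Finset V) : Prop :=
  ∀ x ∈ X, ∀ y ∈ Y, DSepNodes E x y Z

/-- `d-sep(G)` as a set of triples of pairwise disjoint node sets. -/
def DSepSet (E : Finset (V × V)) : Set (Finset V × Finset V × Finset V) :=
  { t | PairwiseDisjoint3 t.1 t.2.1 t.2.2 ∧ DSep E t.1 t.2.1 t.2.2 }

/-- `Close(G)`: add an edge between every ordered pair of distinct initial nodes. -/
def Close (E : Finset (V × V)) : Finset (V × V) :=
  E ∪ ((InitSet E ×ˢ InitSet E).filter fun p => p.1 ≠ p.2)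

/-- `G[C]`: remove all edges into nodes of `C` (so the nodes of `C` are initial). -/
def CutGraph (E : Finset (V × V)) (C : Finset V) : Finset (V × V) :=
  E.filter fun e => e.2 ∉ C

/-- `ι` is a product distribution: it factorizes into its single-node marginals,
i.e. the initial nodes are mutually independent under `ι`. -/
def IsProductDist {U : Finset V} (ι : Asg U → ℝ) : Prop :=
  ∀ b : Asg U,
    ι b = ∏ x : {x // x ∈ U}, ∑ b' : Asg U, if b' x = b x then ι b' else 0

/-! Markov chain notions -/

/-- Reachability in the underlying graph of a DTMC. -/
def MCReach {α : Type} (P : α → α → ℝ) (x y : α) : Prop :=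
  Relation.ReflTransGen (fun a b => 0 < P a b) x y

/-- Bottom strongly connected component of a DTMC: nonempty, closed under
reachability, and strongly connected. -/
def IsBSCC {α : Type} (P : α → α → ℝ) (D : Set α) : Prop :=
  D.Nonempty ∧ (∀ x ∈ D, ∀ y, MCReach P x y → y ∈ D) ∧
    ∀ x ∈ D, ∀ y ∈ D, MCReach P x y

/-- Walks of a given length along positive-probability transitions. -/
def walkLen {α : Type} (P : α → α → ℝ) : ℕ → α → α → Prop
  | 0, x, y => x = y
  | n + 1, x, y => ∃ z, 0 < P x z ∧ walkLen P n z y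

/-- The lengths of the cycles of `D`. -/
def CycleLens {α : Type} (P : α → α → ℝ) (D : Set α) : Set ℕ :=
  { n | 0 < n ∧ ∃ x ∈ D, walkLen P n x x }

/-- `D` is aperiodic: the gcd of the lengths of its cycles equals 1. -/
def AperiodicBSCC {α : Type} (P : α → α → ℝ) (D : Set α) : Prop :=
  ∀ d : ℕ, (∀ n ∈ CycleLens P D, d ∣ n) → d = 1

/-- `D` is periodic: the gcd of the lengths of its cycles is greater than 1. -/
def PeriodicBSCC {α : Type} (P : α → α → ℝ) (D : Set α) : Prop :=
  ∃ d : ℕ, 1 < d ∧ ∀ n ∈ CycleLens P D, d ∣ n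

/-- A GBN is smooth if all CPT entries and all values of `ι` lie in `(0,1)`. -/
def Smooth (B : GBN V) : Prop :=
  (∀ X b, B.cpt X b ∈ Set.Ioo (0 : ℝ) 1) ∧ ∀ d, B.ι d ∈ Set.Ioo (0 : ℝ) 1


/-! Geometric convergence of linear iterations that contract the `ℓ¹` norm -/

section Contraction

variable {α : Type} [Fintype α]

/-- If on a subspace `Z` the matrix `P` acts like a nonnegative matrix `Q` whose row sums are all
below one, then `P` contracts the `ℓ¹` norm on `Z`. -/
theorem exists_l1_contraction (P Q : α → α → ℝ) (Z : Set (α → ℝ))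
    (hQ0 : ∀ b c, 0 ≤ Q b c) (hQ1 : ∀ b, ∑ c, Q b c < 1)
    (hPQ : ∀ x ∈ Z, vecMul x P = vecMul x Q) :
    ∃ k : ℝ, 0 ≤ k ∧ k < 1 ∧ ∀ x ∈ Z, ∑ c, |vecMul x P c| ≤ k * ∑ b, |x b| := by
  obtain ⟨k, hk0, hk1, hk⟩ : ∃ k : ℝ, 0 ≤ k ∧ k < 1 ∧ ∀ b, ∑ c, Q b c ≤ k := by
    rcases isEmpty_or_nonempty α with h | h
    · exact ⟨0, le_rfl, one_pos, fun b => h.elim b⟩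
    · obtain ⟨m, hm⟩ := Finite.exists_max fun b => ∑ c, Q b c
      exact ⟨∑ c, Q m c, Finset.sum_nonneg fun c _ => hQ0 m c, hQ1 m, hm⟩
  refine ⟨k, hk0, hk1, fun x hx => ?_⟩
  rw [hPQ x hx]
  calc ∑ c, |vecMul x Q c| ≤ ∑ c, ∑ b, |x b| * Q b c := by
        refine Finset.sum_le_sum fun c _ => (Finset.abs_sum_le_sum_abs _ _).trans ?_
        exact Finset.sum_le_sum fun b _ => by rw [abs_mul, abs_of_nonneg (hQ0 b c)]
    _ = ∑ b, |x b| * ∑ c, Q b c := by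
        rw [Finset.sum_comm]
        simp only [Finset.mul_sum]
    _ ≤ ∑ b, |x b| * k :=
        Finset.sum_le_sum fun b _ => mul_le_mul_of_nonneg_left (hk b) (abs_nonneg _)
    _ = k * ∑ b, |x b| := by rw [← Finset.sum_mul, mul_comm]

theorem vecMul_sub (x y : α → ℝ) (P : α → α → ℝ) :
    vecMul (x - y) P = vecMul x P - vecMul y P := by
  funext c
  simp [vecMul, sub_mul, Finset.sum_sub_distrib]

theorem dist_le_sum_abs_sub (x y : α → ℝ) : dist x y ≤ ∑ c, |(x - y) c| := by
  refine (dist_pi_le_iff (Finset.sum_nonneg fun _ _ => abs_nonneg _)).2 fun c => ?_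
  rw [Real.dist_eq]
  exact Finset.single_le_sum (f := fun c => |(x - y) c|) (fun _ _ => abs_nonneg _)
    (Finset.mem_univ c)

section Iterates

variable {P : α → α → ℝ} {Z : Set (α → ℝ)} {k : ℝ}

theorem dist_matIter_le (hk0 : 0 ≤ k) (hZ : ∀ x ∈ Z, vecMul x P ∈ Z)
    (hk : ∀ x ∈ Z, ∑ c, |vecMul x P c| ≤ k * ∑ b, |x b|)
    {x y : α → ℝ} (hxy : x - y ∈ Z) (n : ℕ) :
    dist (matIter P x n) (matIter P y n) ≤ (∑ b, |(x - y) b|) * k ^ n := by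
  refine (dist_le_sum_abs_sub _ _).trans ?_
  suffices h : matIter P x n - matIter P y n ∈ Z ∧
      ∑ c, |(matIter P x n - matIter P y n) c| ≤ (∑ b, |(x - y) b|) * k ^ n from h.2
  induction n with
  | zero => exact ⟨hxy, by simp [matIter]⟩
  | succ n ih =>
    have hsucc : matIter P x (n + 1) - matIter P y (n + 1) =
        vecMul (matIter P x n - matIter P y n) P := (vecMul_sub _ _ _).symm
    rw [hsucc]
    refine ⟨hZ _ ih.1, (hk _ ih.1).trans ?_⟩
    rw [pow_succ, ← mul_assoc, mul_comm _ k]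
    exact mul_le_mul_of_nonneg_left ih.2 hk0

theorem matIter_vecMul (P : α → α → ℝ) (x : α → ℝ) (n : ℕ) :
    matIter P (vecMul x P) n = matIter P x (n + 1) := by
  induction n with
  | zero => rfl
  | succ n ih => exact congrArg (vecMul · P) ih

theorem exists_tendsto_matIter (hk0 : 0 ≤ k) (hk1 : k < 1) (hZ : ∀ x ∈ Z, vecMul x P ∈ Z)
    (hk : ∀ x ∈ Z, ∑ c, |vecMul x P c| ≤ k * ∑ b, |x b|)
    {x : α → ℝ} (hx : x - vecMul x P ∈ Z) :
    ∃ l, Tendsto (matIter P x) atTop (nhds l) := by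
  refine cauchySeq_tendsto_of_complete
    (cauchySeq_of_le_geometric k (∑ b, |(x - vecMul x P) b|) hk1 fun n => ?_)
  rw [← matIter_vecMul]
  exact dist_matIter_le hk0 hZ hk hx n

theorem matIter_limit_unique (hk0 : 0 ≤ k) (hk1 : k < 1) (hZ : ∀ x ∈ Z, vecMul x P ∈ Z)
    (hk : ∀ x ∈ Z, ∑ c, |vecMul x P c| ≤ k * ∑ b, |x b|)
    {x y l m : α → ℝ} (hxy : x - y ∈ Z) (hl : Tendsto (matIter P x) atTop (nhds l))
    (hm : Tendsto (matIter P y) atTop (nhds m)) : l = m := by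
  refine dist_eq_zero.1 (tendsto_nhds_unique (hl.dist hm) ?_)
  refine squeeze_zero (fun _ => dist_nonneg) (dist_matIter_le hk0 hZ hk hxy) ?_
  simpa using (tendsto_pow_atTop_nhds_zero_of_lt_one hk0 hk1).const_mul (∑ b, |(x - y) b|)

end Iterates

theorem sum_vecMul_of_stochastic {P : α → α → ℝ} (h : ∀ b, ∑ c, P b c = 1) (x : α → ℝ) :
    ∑ c, vecMul x P c = ∑ b, x b := by
  simp only [vecMul]
  rw [Finset.sum_comm]
  simp [← Finset.mul_sum, h]

/-- The iterates of a positive matrix that is either stochastic or strictly substochastic converge,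
and the limit is the same for all initial distributions. -/
theorem exists_common_limit_matIter (P : α → α → ℝ) (hpos : ∀ b c, 0 < P b c)
    (hrow : (∀ b, ∑ c, P b c = 1) ∨ ∀ b, ∑ c, P b c < 1) :
    ∃ l, ∀ x, IsDist x → Tendsto (matIter P x) atTop (nhds l) := by
  obtain ⟨Z, k, hdist, hk0, hk1, hZ, hk, hstep⟩ : ∃ (Z : Set (α → ℝ)) (k : ℝ),
      (∀ x y, IsDist x → IsDist y → x - y ∈ Z) ∧ 0 ≤ k ∧ k < 1 ∧
      (∀ x ∈ Z, vecMul x P ∈ Z) ∧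
      (∀ x ∈ Z, ∑ c, |vecMul x P c| ≤ k * ∑ b, |x b|) ∧
      ∀ x, x - vecMul x P ∈ Z := by
    rcases hrow with hrow | hrow
    · obtain ⟨ε, hε, hεP⟩ : ∃ ε : ℝ, 0 < ε ∧ ∀ b c, ε ≤ P b c := by
        rcases isEmpty_or_nonempty α with h | h
        · exact ⟨1, one_pos, fun b => h.elim b⟩
        · obtain ⟨m, hm⟩ := Finite.exists_min fun p : α × α => P p.1 p.2
          exact ⟨P m.1 m.2, hpos _ _, fun b c => hm (b, c)⟩
      obtain ⟨k, hk0, hk1, hk⟩ := exists_l1_contraction P (fun b c => P b c - ε)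
        {x | ∑ b, x b = 0} (fun b c => sub_nonneg.2 (hεP b c))
        (fun b => by
          have : 0 < Fintype.card α := Fintype.card_pos_iff.2 ⟨b⟩
          simp only [Finset.sum_sub_distrib, hrow, Finset.sum_const, Finset.card_univ,
            nsmul_eq_mul]
          have : 0 < (Fintype.card α : ℝ) * ε := by positivity
          linarith)
        (fun x hx => by
          funext c
          simp only [Set.mem_ofPred_eq] at hx
          simp [vecMul, mul_sub, Finset.sum_sub_distrib, ← Finset.sum_mul, hx])
      refine ⟨{x | ∑ b, x b = 0}, k, fun x y hx hy => ?_, hk0, hk1, fun x hx => ?_, hk,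
        fun x => ?_⟩
      · simp [Finset.sum_sub_distrib, hx.2, hy.2]
      · simpa [sum_vecMul_of_stochastic hrow] using hx
      · simp [Finset.sum_sub_distrib, sum_vecMul_of_stochastic hrow]
    · obtain ⟨k, hk0, hk1, hk⟩ := exists_l1_contraction P P Set.univ
        (fun b c => (hpos b c).le) hrow (fun _ _ => rfl)
      exact ⟨Set.univ, k, fun _ _ _ _ => trivial, hk0, hk1, fun _ _ => trivial, hk,
        fun _ => trivial⟩
  by_cases h : ∃ x : α → ℝ, IsDist x
  · obtain ⟨x, hx⟩ := h
    obtain ⟨l, hl⟩ := exists_tendsto_matIter hk0 hk1 hZ hk (hstep x)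
    refine ⟨l, fun y hy => ?_⟩
    obtain ⟨m, hm⟩ := exists_tendsto_matIter hk0 hk1 hZ hk (hstep y)
    rwa [matIter_limit_unique hk0 hk1 hZ hk (hdist x y hx hy) hl hm]
  · exact ⟨0, fun x hx => (h ⟨x, hx⟩).elim⟩

end Contraction

/-! Summing out nodes of a network -/

theorem copyProb_pos {B : GBN V} (hs : Smooth B) (X : V) (v : Bool) (b : V → Bool) :
    0 < copyProb B X v b := by
  have h := hs.1 X fun p => b p.1
  cases v
  · simpa [copyProb] using h.2
  · simpa [copyProb] using h.1

theorem sum_copyProb (B : GBN V) (X : V) (b : V → Bool) : ∑ v, copyProb B X v b = 1 := by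
  simp [copyProb]

/-- A sum over the assignments agreeing with `a` off `S` splits according to the value at `X ∈ S`. -/
theorem sum_agree_off_eq_sum_update (S : Finset V) {X : V} (hX : X ∈ S) (a : V → Bool)
    (g : (V → Bool) → ℝ) :
    (∑ b : V → Bool, if ∀ x, x ∉ S → b x = a x then g b else 0) =
      ∑ v, ∑ b : V → Bool,
        if ∀ x, x ∉ S.erase X → b x = Function.update a X v x then g b else 0 := by
  rw [Finset.sum_comm]
  refine Finset.sum_congr rfl fun b _ => ?_
  have key : ∀ v, (∀ x, x ∉ S.erase X → b x = Function.update a X v x) ↔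
      v = b X ∧ ∀ x, x ∉ S → b x = a x := by
    intro v
    constructor
    · intro h
      refine ⟨by simpa using (h X (by simp)).symm, fun x hx => ?_⟩
      have hne : x ≠ X := fun e => hx (e ▸ hX)
      simpa [hne] using h x (by simp [hx])
    · rintro ⟨rfl, h⟩ x hx
      by_cases hne : x = X
      · subst hne; simp
      · rw [Function.update_of_ne hne]
        exact h x fun hS => hx (Finset.mem_erase.2 ⟨hne, hS⟩)
  simp only [key, ite_and]
  simp

/-- The local probabilities of a set of nodes outside the cutset sum to one. -/
theorem sum_prod_copyProb_eq_one (B : GBN V) {C : Finset V} (hC : IsCutset B.edges C)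
    (S : Finset V) (hS : ∀ x ∈ S, x ∉ C) (a : V → Bool) :
    (∑ b : V → Bool, if ∀ x, x ∉ S → b x = a x then ∏ X ∈ S, copyProb B X (b X) b else 0) = 1 := by
  induction S using Finset.strongInduction generalizing a with
  | H S ih =>
    rcases S.eq_empty_or_nonempty with rfl | hne
    · simp [← funext_iff]
    · let r := Relation.TransGen fun a b => (a, b) ∈ B.edges ∧ a ∉ C ∧ b ∉ C
      have : Std.Irrefl r := ⟨hC⟩
      have : IsTrans V r := ⟨fun _ _ _ => Relation.TransGen.trans⟩
      have hwf : WellFounded r := Finite.wellFounded_of_trans_of_irrefl r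
      obtain ⟨X, hX, hmin⟩ := hwf.has_min (S : Set V) hne
      have hpar : ∀ p ∈ Pre B.edges X, p ∉ S := by
        intro p hp hpS
        obtain ⟨e, he, rfl⟩ := Finset.mem_image.1 hp
        obtain ⟨hedge, rfl⟩ := Finset.mem_filter.1 he
        exact hmin _ hpS (Relation.TransGen.single ⟨hedge, hS _ hpS, hS _ hX⟩)
      rw [sum_agree_off_eq_sum_update S hX, ← sum_copyProb B X a]
      refine Finset.sum_congr rfl fun v _ => ?_
      have hrec := ih (S.erase X) (Finset.erase_ssubset hX)
        (fun x hx => hS x (Finset.mem_of_mem_erase hx)) (Function.update a X v)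
      rw [← mul_one (copyProb B X v a), ← hrec, Finset.mul_sum]
      refine Finset.sum_congr rfl fun b _ => ?_
      split_ifs with h
      · have hv : b X = v := by simpa using h X (by simp)
        have hb : (fun p : {p // p ∈ Pre B.edges X} => b p.1) = fun p => a p.1 := by
          funext p
          have hpS := hpar p.1 p.2
          have hpX : p.1 ≠ X := fun e => hpS (by rwa [e])
          simpa [hpX] using h p.1 fun h' => hpS (Finset.mem_of_mem_erase h')
        rw [← Finset.mul_prod_erase S _ hX, hv]
        simp only [copyProb, hb]
      · simp

/-! The cutset Markov chain -/

/-- The weight of the part of a dissected network that does not belong to the cutset. -/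
def bodyWeight (B : GBN V) (C : Finset V) (b : V → Bool) : ℝ :=
  B.ι (fun x => b x.1) * ∏ X ∈ (Finset.univ \ InitSet B.edges) \ C, copyProb B X (b X) b

/-- Transition matrix of the cutset chain, with the body of the network summed out. -/
def chainMatrix (B : GBN V) (C : Finset V) (d c : Asg C) : ℝ :=
  ∑ b : V → Bool,
    if d = (fun x => b x.1) then bodyWeight B C b * ∏ Y ∈ C.attach, copyProb B Y.1 (c Y) b else 0

theorem marginal_Next (B : GBN V) (C : Finset V) (γ : Asg C → ℝ) (c : Asg C) :
    marginal (Next B C γ) C c = ∑ b, distDissect B C γ b c := by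
  have hexp : marginal (Next B C γ) C c = ∑ a : V → Bool, ∑ b : V → Bool,
      if Agrees a C c ∧ ∀ x, x ∉ C → b x = a x then
        distDissect B C γ b (fun y => a y.1) else 0 := by
    refine Finset.sum_congr rfl fun a _ => ?_
    by_cases h : Agrees a C c
    · rw [if_pos h, Next]
      exact Finset.sum_congr rfl fun b _ => if_congr (and_iff_right h).symm rfl rfl
    · rw [if_neg h]
      exact (Finset.sum_eq_zero fun b _ => if_neg fun hb => h hb.1).symm
  rw [hexp, Finset.sum_comm]
  refine Finset.sum_congr rfl fun b _ => ?_
  let a₀ : V → Bool := fun x => if h : x ∈ C then c ⟨x, h⟩ else b x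
  have hiff : ∀ a : V → Bool, (Agrees a C c ∧ ∀ x, x ∉ C → b x = a x) ↔ a = a₀ := by
    intro a
    constructor
    · rintro ⟨hc, hb⟩
      funext x
      by_cases hx : x ∈ C
      · simp [a₀, hx, ← hc ⟨x, hx⟩]
      · simp [a₀, hx, hb x hx]
    · rintro rfl
      exact ⟨fun x => by simp [a₀], fun x hx => by simp [a₀, hx]⟩
  simp only [hiff, Finset.sum_ite_eq', Finset.mem_univ, if_true]
  congr 1
  funext y
  simp [a₀]

theorem marginal_Next_eq_vecMul (B : GBN V) (C : Finset V) (γ : Asg C → ℝ) :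
    marginal (Next B C γ) C = vecMul γ (chainMatrix B C) := by
  funext c
  rw [marginal_Next]
  simp only [vecMul, chainMatrix, Finset.mul_sum]
  rw [Finset.sum_comm]
  refine Finset.sum_congr rfl fun b _ => ?_
  simp only [mul_ite, mul_zero, Finset.sum_ite_eq', Finset.mem_univ, if_true, distDissect,
    bodyWeight]
  ring

theorem nextSeq_eq_matIter (B : GBN V) (C : Finset V) (γ0 : Asg C → ℝ) :
    nextSeq B C γ0 = matIter (chainMatrix B C) γ0 := by
  funext n
  induction n with
  | zero => rfl
  | succ n ih => rw [nextSeq, marginal_Next_eq_vecMul, ih, matIter]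

theorem bodyWeight_pos {B : GBN V} (hs : Smooth B) (C : Finset V) (b : V → Bool) :
    0 < bodyWeight B C b :=
  mul_pos (hs.2 _).1 (Finset.prod_pos fun _ _ => copyProb_pos hs _ _ _)

theorem exists_extension (U : Finset V) (d : Asg U) :
    ∃ b : V → Bool, d = fun x => b x.1 :=
  ⟨fun x => if h : x ∈ U then d ⟨x, h⟩ else false, by funext x; simp⟩

theorem chainMatrix_pos {B : GBN V} (hs : Smooth B) (C : Finset V) (d c : Asg C) :
    0 < chainMatrix B C d c := by
  have hterm : ∀ b : V → Bool, 0 < bodyWeight B C b * ∏ Y ∈ C.attach, copyProb B Y.1 (c Y) b :=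
    fun b => mul_pos (bodyWeight_pos hs C b) (Finset.prod_pos fun _ _ => copyProb_pos hs _ _ _)
  obtain ⟨b, hb⟩ := exists_extension C d
  refine Finset.sum_pos' (fun b' _ => ?_) ⟨b, Finset.mem_univ _, ?_⟩
  · split_ifs
    exacts [(hterm b').le, le_rfl]
  · rw [if_pos hb]
    exact hterm b

theorem sum_chainMatrix (B : GBN V) (C : Finset V) (d : Asg C) :
    ∑ c, chainMatrix B C d c =
      ∑ b : V → Bool, if d = (fun x => b x.1) then bodyWeight B C b else 0 := by
  simp only [chainMatrix]
  rw [Finset.sum_comm]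
  refine Finset.sum_congr rfl fun b _ => ?_
  split_ifs with h
  · have hcopies : ∑ c : Asg C, ∏ Y ∈ C.attach, copyProb B Y.1 (c Y) b = 1 := by
      have := Finset.prod_univ_sum (fun _ : {x // x ∈ C} => (Finset.univ : Finset Bool))
        (fun Y v => copyProb B Y.1 v b)
      simp only [sum_copyProb, Finset.prod_const_one, Fintype.piFinset_univ] at this
      exact this.symm
    rw [← Finset.mul_sum, hcopies, mul_one]
  · simp

/-- The row sums of the cutset chain are the marginal probabilities, under the initial
distribution, of the initial nodes lying in the cutset. -/
theorem sum_chainMatrix_eq_sum_ι (B : GBN V) {C : Finset V} (hC : IsCutset B.edges C)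
    (d : Asg C) :
    ∑ c, chainMatrix B C d c = ∑ e : Asg (InitSet B.edges),
      if ∀ x (hx : x ∈ C) (hi : x ∈ InitSet B.edges), d ⟨x, hx⟩ = e ⟨x, hi⟩ then B.ι e else 0 := by
  rw [sum_chainMatrix]
  have hsplit : ∀ b : V → Bool, (if d = (fun x => b x.1) then bodyWeight B C b else 0) =
      ∑ e : Asg (InitSet B.edges), if e = (fun x => b x.1) then
        (if d = (fun x => b x.1) then bodyWeight B C b else 0) else 0 := fun b => by simp
  rw [Finset.sum_congr rfl fun b _ => hsplit b, Finset.sum_comm]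
  refine Finset.sum_congr rfl fun e _ => ?_
  split_ifs with hcons
  · let a : V → Bool := fun x => if h : x ∈ C then d ⟨x, h⟩ else
      if h : x ∈ InitSet B.edges then e ⟨x, h⟩ else false
    have hone := sum_prod_copyProb_eq_one B hC ((Finset.univ \ InitSet B.edges) \ C)
      (fun x hx => (Finset.mem_sdiff.1 hx).2) a
    rw [← mul_one (B.ι e), ← hone, Finset.mul_sum]
    refine Finset.sum_congr rfl fun b _ => ?_
    have hiff : (∀ x, x ∉ (Finset.univ \ InitSet B.edges) \ C → b x = a x) ↔
        e = (fun x => b x.1) ∧ d = fun x => b x.1 := by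
      constructor
      · intro h
        constructor
        · funext x
          rw [h x.1 (by simp [x.2])]
          by_cases hx : x.1 ∈ C
          · simp [a, hx, hcons x.1 hx x.2]
          · simp [a, hx]
        · funext x
          rw [h x.1 (by simp [x.2])]
          simp [a]
      · rintro ⟨rfl, rfl⟩ x hx
        by_cases hxC : x ∈ C
        · simp [a, hxC]
        · have hxi : x ∈ InitSet B.edges := by
            by_contra hn
            exact hx (by simp [hn, hxC])
          simp [a, hxC, hxi]
    simp only [hiff, ite_and]
    split_ifs with h1 h2
    · simp [bodyWeight, ← h1]
    · simp
    · simp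
  · refine Finset.sum_eq_zero fun b _ => ?_
    split_ifs with h1 h2
    · exact (hcons fun x hx hi => by rw [h1, h2]).elim
    · rfl
    · rfl

theorem chainMatrix_row_sums {B : GBN V} (hs : Smooth B) {C : Finset V}
    (hC : IsCutset B.edges C) :
    (∀ d, ∑ c, chainMatrix B C d c = 1) ∨ ∀ d, ∑ c, chainMatrix B C d c < 1 := by
  simp only [sum_chainMatrix_eq_sum_ι B hC]
  by_cases h : ∃ x, x ∈ C ∧ x ∈ InitSet B.edges
  · obtain ⟨x, hx, hi⟩ := h
    refine Or.inr fun d => ?_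
    rw [← B.ι_dist.2]
    refine Finset.sum_lt_sum (fun e _ => ?_) ⟨fun _ => !d ⟨x, hx⟩, Finset.mem_univ _, ?_⟩
    · split_ifs
      exacts [le_rfl, B.ι_dist.1 e]
    · rw [if_neg fun h => by simpa using h x hx hi]
      exact (hs.2 _).1
  · refine Or.inl fun d => ?_
    rw [← B.ι_dist.2]
    exact Finset.sum_congr rfl fun e _ => if_pos fun x hx hi => (h ⟨x, hx, hi⟩).elim

/-- For a smooth GBN `B` and every cutset `C`, the limit
semantics `[B]_{Lim-C}` is a singleton, and `Lim(B,C,γ0)` is defined for every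
initial cutset distribution `γ0`. -/
theorem stmt12 {V : Type} [Fintype V] [DecidableEq V]
    (B : GBN V) (hs : Smooth B) (C : Finset V) (hC : IsCutset B.edges C) :
    (∃ μ, LimSem B C = {μ}) ∧
    ∀ γ0 : Asg C → ℝ, IsDist γ0 →
      ∃ γ : Asg C → ℝ, Tendsto (nextSeq B C γ0) atTop (nhds γ) := by
  obtain ⟨l, hl⟩ := exists_common_limit_matIter (chainMatrix B C) (chainMatrix_pos hs C)
    (chainMatrix_row_sums hs hC)
  simp only [← nextSeq_eq_matIter] at hl
  refine ⟨⟨Extend B C l, Set.eq_singleton_iff_unique_mem.2 ⟨?_, ?_⟩⟩, fun γ0 h => ⟨l, hl γ0 h⟩⟩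
  · have hD : IsDist (DiracD (fun _ => false : Asg C)) :=
      ⟨fun a => by unfold DiracD; split_ifs <;> norm_num, by simp [DiracD]⟩
    exact ⟨_, l, hD, hl _ hD, rfl⟩
  · rintro μ ⟨γ0, γ, h0, hγ, rfl⟩
    rw [tendsto_nhds_unique hγ (hl γ0 h0)]

end GBNPaper
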